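/- Let k ≥ 1, π ∈ (0,1), and let (X_n)_{n≥1} be the process T(k,π) with an arbitrary initial distribution on {0,1}^k. Then with probability one the following holds: for every binary word u with 1 ≤ |u| ≤ k, lim_{t→∞} ν_t(u)/(t − |u|) = 2^{−|u|}, where ν_t(u) is the number of indices 1 ≤ i ≤ t − |u| + 1 with X_i X_{i+1} … X_{i+|u|−1} = u. -/

import Mathlib

mutual
/-- `tf0 π u` is the conditional probability `t_{k,π}(0|u)` for the two-faced
process `T(k,π)`, where `k = u.length ≥ 1` (bits: `false = 0`, `true = 1`,
words written with the most recent conditioning bit last, so `0u` is `false :: u`). -/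
noncomputable def tf0 (π : ℝ) : List Bool → ℝ
  | [] => 1 / 2
  | [false] => π
  | [true] => 1 - π
  | false :: b :: u => tf0 π (b :: u)
  | true :: b :: u => tb0 π (b :: u)

/-- `tb0 π u` is `t̄_{k,π}(0|u)` for the process `T̄(k,π)`. -/
noncomputable def tb0 (π : ℝ) : List Bool → ℝ
  | [] => 1 / 2
  | [false] => 1 - π
  | [true] => π
  | false :: b :: u => tb0 π (b :: u)
  | true :: b :: u => tf0 π (b :: u)
end

/-- `tface π w u = t_{k,π}(w|u)`, using `t(1|u) = 1 - t(0|u)`. -/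
noncomputable def tface (π : ℝ) (w : Bool) (u : List Bool) : ℝ :=
  if w then 1 - tf0 π u else tf0 π u

/-- `tbarface π w u = t̄_{k,π}(w|u)`. -/
noncomputable def tbarface (π : ℝ) (w : Bool) (u : List Bool) : ℝ :=
  if w then 1 - tb0 π u else tb0 π u

/-- XOR of the bits of a binary word. -/
def xorWord (u : List Bool) : Bool := u.foldl xor false

open MeasureTheory ProbabilityTheory Filter

namespace TwoFaced

theorem tf_facts (π : ℝ) (hπ : π ∈ Set.Ioo (0 : ℝ) 1) (u : List Bool) :
    tf0 π u + tb0 π u = 1 ∧ 0 < tf0 π u ∧ 0 < tb0 π u := by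
  obtain ⟨h0, h1⟩ := hπ
  induction u with
  | nil => simp only [tf0, tb0]; norm_num
  | cons a u ih =>
    cases u with
    | nil => cases a <;> simp only [tf0, tb0] <;> refine ⟨?_, ?_, ?_⟩ <;> linarith
    | cons b u =>
      obtain ⟨i1, i2, i3⟩ := ih
      cases a <;> simp only [tf0, tb0] <;> refine ⟨?_, ?_, ?_⟩ <;> linarith

theorem tf_flip (π : ℝ) (hπ : π ∈ Set.Ioo (0 : ℝ) 1) (u : List Bool) :
    tf0 π (false :: u) + tf0 π (true :: u) = 1 ∧
    tb0 π (false :: u) + tb0 π (true :: u) = 1 := by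
  cases u with
  | nil => simp only [tf0, tb0]; constructor <;> ring
  | cons b u =>
    have := (tf_facts π hπ (b :: u)).1
    simp only [tf0, tb0]; constructor <;> linarith

theorem kernel_facts (π : ℝ) (hπ : π ∈ Set.Ioo (0 : ℝ) 1)
    (κ : Bool → List Bool → ℝ) (hκ : κ = tface π ∨ κ = tbarface π) :
    (∀ w u, 0 < κ w u ∧ κ w u < 1) ∧
    (∀ w u, κ w (false :: u) + κ w (true :: u) = 1) := by
  constructor
  · intro w u
    obtain ⟨h1, h2, h3⟩ := tf_facts π hπ u
    rcases hκ with rfl | rfl <;> cases w <;> simp [tface, tbarface] <;> constructor <;> linarith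
  · intro w u
    obtain ⟨h1, h2⟩ := tf_flip π hπ u
    rcases hκ with rfl | rfl <;> cases w <;> simp [tface, tbarface] <;> linarith

/-- Consistent shift-invariant weights with kernel `κ` are uniform on words of length `≤ k`. -/
theorem uniform_of_stationary (k : ℕ) (κ : Bool → List Bool → ℝ)
    (hpos : ∀ w u, 0 < κ w u)
    (hflip : ∀ w u, κ w (false :: u) + κ w (true :: u) = 1)
    (f : List Bool → ℝ) (hnil : f [] = 1)
    (hr : ∀ u, f u = f (u ++ [false]) + f (u ++ [true]))
    (hl : ∀ u, f u = f (false :: u) + f (true :: u))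
    (hk : ∀ v w, v.length = k → f (v ++ [w]) = κ w v * f v) :
    ∀ u : List Bool, u.length ≤ k → f u = ((2 : ℝ) ^ u.length)⁻¹ := by
  have hfin : ({v : List Bool | v.length = k}).Finite := List.finite_length_eq Bool k
  obtain ⟨v0, hv0, hmax⟩ := Set.exists_max_image _ f hfin ⟨List.replicate k false, by simp⟩
  simp only [Set.mem_ofPred_eq] at hv0 hmax
  have key : ∀ y : List Bool, y.length ≤ k →
      (∀ z : List Bool, z.length + y.length = k → f (z ++ y) = f v0) →
      ∀ z : List Bool, z.length = k → f z = f v0 := by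
    intro y
    induction y using List.reverseRecOn with
    | nil => intro _ h z hz; simpa using h z (by simpa using hz)
    | append_singleton y w ih =>
      intro hy h
      simp only [List.length_append, List.length_singleton] at hy h
      apply ih (by omega)
      intro z hz
      cases z with
      | nil => simp at hz; omega
      | cons a z =>
        simp only [List.length_cons] at hz
        have h1 := h z (by omega)
        rw [← List.append_assoc, hl, ← List.cons_append,
          ← List.cons_append (a := true), hk (false :: (z ++ y)) w (by simp; omega),
          hk (true :: (z ++ y)) w (by simp; omega)] at h1
        have h2 := hflip w (z ++ y)
        have m0 := hmax (false :: (z ++ y)) (by simp; omega)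
        have m1 := hmax (true :: (z ++ y)) (by simp; omega)
        have p0 := hpos w (false :: (z ++ y))
        have p1 := hpos w (true :: (z ++ y))
        rw [List.cons_append]
        have e0 := mul_nonneg p0.le (sub_nonneg.2 m0)
        have e1 := mul_nonneg p1.le (sub_nonneg.2 m1)
        have e : κ w (false :: (z ++ y)) * (f v0 - f (false :: (z ++ y))) +
          κ w (true :: (z ++ y)) * (f v0 - f (true :: (z ++ y))) = 0 := by
          linear_combination (f v0) * h2 - h1
        cases a
        · have : κ w (false :: (z ++ y)) * (f v0 - f (false :: (z ++ y))) = 0 := by linarith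
          rcases mul_eq_zero.1 this with h | h <;> linarith
        · have : κ w (true :: (z ++ y)) * (f v0 - f (true :: (z ++ y))) = 0 := by linarith
          rcases mul_eq_zero.1 this with h | h <;> linarith
  have hconst := key v0 hv0.le (by
    intro z hz
    have : z = [] := List.length_eq_zero_iff.1 (by omega)
    simp [this])
  have h2 : ∀ j : ℕ, ∀ u : List Bool, u.length + j = k → f u = 2 ^ j * f v0 := by
    intro j
    induction j with
    | zero => intro u hu; simpa using hconst u (by simpa using hu)
    | succ j ih =>
      intro u hu
      rw [hr, ih (u ++ [false]) (by simp; omega), ih (u ++ [true]) (by simp; omega)]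
      ring
  have h0 : f v0 = ((2 : ℝ) ^ k)⁻¹ := by
    have := h2 k [] (by simp)
    rw [hnil] at this
    exact eq_inv_of_mul_eq_one_right this.symm
  intro u hu
  obtain ⟨j, hj⟩ := Nat.exists_eq_add_of_le hu
  rw [h2 j u hj.symm, h0, hj, pow_add]
  field_simp

/-- Indicator that `u` occurs in `x` at position `i`. -/
noncomputable def occ (x : ℕ → Bool) (u : List Bool) (i : ℕ) : ℝ :=
  open Classical in if ∀ r, r < u.length → x (i + r) = u.getD r false then 1 else 0

theorem occ_nil (x : ℕ → Bool) (i : ℕ) : occ x [] i = 1 := by simp [occ]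

theorem occ_nonneg (x : ℕ → Bool) (u : List Bool) (i : ℕ) : 0 ≤ occ x u i := by
  unfold occ; split_ifs <;> norm_num

theorem occ_le_one (x : ℕ → Bool) (u : List Bool) (i : ℕ) : occ x u i ≤ 1 := by
  unfold occ; split_ifs <;> norm_num

theorem occ_single (x : ℕ → Bool) (w : Bool) (i : ℕ) :
    occ x [w] i = if x i = w then 1 else 0 := by simp [occ]

theorem occ_append (x : ℕ → Bool) (u v : List Bool) (i : ℕ) :
    occ x (u ++ v) i = occ x u i * occ x v (i + u.length) := by
  unfold occ
  rw [ite_zero_mul_ite_zero, one_mul]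
  congr 1
  rw [eq_iff_iff]
  constructor
  · intro h
    constructor
    · intro r hr
      rw [h r (by simp; omega), List.getD_append _ _ _ _ hr]
    · intro r hr
      rw [add_assoc, h _ (by simp; omega), List.getD_append_right _ _ _ _ (by omega)]
      simp
  · rintro ⟨h1, h2⟩ r hr
    rcases lt_or_ge r u.length with h | h
    · rw [h1 r h, List.getD_append _ _ _ _ h]
    · rw [List.getD_append_right _ _ _ _ h, ← h2 _ (by simp at hr; omega)]
      congr 1; omega

theorem occ_right (x : ℕ → Bool) (u : List Bool) (i : ℕ) :
    occ x u i = occ x (u ++ [false]) i + occ x (u ++ [true]) i := by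
  rw [occ_append, occ_append, occ_single, occ_single]
  cases x (i + u.length) <;> simp

theorem occ_left (x : ℕ → Bool) (u : List Bool) (i : ℕ) :
    occ x u (i + 1) = occ x (false :: u) i + occ x (true :: u) i := by
  rw [← List.singleton_append, ← List.singleton_append (x := true), occ_append, occ_append,
    occ_single, occ_single]
  cases x i <;> simp

/-- Deviation term. -/
noncomputable def dev (κ : Bool → List Bool → ℝ) (v : List Bool) (w : Bool) (x : ℕ → Bool)
    (i : ℕ) : ℝ := occ x (v ++ [w]) i - κ w v * occ x v i

theorem dev_eq (κ : Bool → List Bool → ℝ) (v : List Bool) (w : Bool) (x : ℕ → Bool) (i : ℕ) :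
    dev κ v w x i = occ x v i * (occ x [w] (i + v.length) - κ w v) := by
  rw [dev, occ_append]; ring

theorem dev_abs (κ : Bool → List Bool → ℝ) (hκ : ∀ w u, 0 < κ w u ∧ κ w u < 1)
    (v : List Bool) (w : Bool) (x : ℕ → Bool) (i : ℕ) : |dev κ v w x i| ≤ 1 := by
  rw [dev_eq, abs_mul, abs_of_nonneg (occ_nonneg _ _ _)]
  have h1 := occ_nonneg x [w] (i + v.length)
  have h2 := occ_le_one x [w] (i + v.length)
  have h3 : |occ x [w] (i + v.length) - κ w v| ≤ 1 := by
    have := hκ w v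
    rw [abs_le]; constructor <;> linarith
  exact mul_le_one₀ (occ_le_one _ _ _) (abs_nonneg _) h3

/-- Deterministic part. -/
theorem deterministic (k : ℕ) (κ : Bool → List Bool → ℝ)
    (hpos : ∀ w u, 0 < κ w u)
    (hflip : ∀ w u, κ w (false :: u) + κ w (true :: u) = 1)
    (x : ℕ → Bool)
    (hdev : ∀ v w, v.length = k →
      Tendsto (fun N : ℕ => (∑ i ∈ Finset.range N, dev κ v w x (i + 1)) / (N : ℝ)) atTop (nhds 0))
    (u : List Bool) (hu : u.length ≤ k) :
    Tendsto (fun N : ℕ => (∑ i ∈ Finset.range N, occ x u (i + 1)) / (N : ℝ)) atTop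
      (nhds (((2 : ℝ) ^ u.length)⁻¹)) := by
  rw [tendsto_iff_ultrafilter]
  intro g hg
  have hex : ∀ u : List Bool, ∃ a : ℝ,
      Tendsto (fun N : ℕ => (∑ i ∈ Finset.range N, occ x u (i + 1)) / (N : ℝ)) g (nhds a) := by
    intro u
    have hc : IsCompact (Set.Icc (0 : ℝ) 1) := isCompact_Icc
    obtain ⟨a, -, ha⟩ := hc.ultrafilter_le_nhds'
      (g.map (fun N : ℕ => (∑ i ∈ Finset.range N, occ x u (i + 1)) / (N : ℝ))) (by
        rw [Ultrafilter.mem_map]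
        refine Filter.univ_mem' ?_
        intro N
        have h0 : 0 ≤ ∑ i ∈ Finset.range N, occ x u (i + 1) :=
          Finset.sum_nonneg fun i _ => occ_nonneg _ _ _
        have h1 : ∑ i ∈ Finset.range N, occ x u (i + 1) ≤ N := by
          calc _ ≤ ∑ i ∈ Finset.range N, (1 : ℝ) := Finset.sum_le_sum fun i _ => occ_le_one _ _ _
            _ = N := by simp
        exact ⟨by positivity, div_le_one_of_le₀ h1 (by positivity)⟩)
    exact ⟨a, ha⟩
  choose f hf using hex
  have main := uniform_of_stationary k κ hpos hflip f ?_ ?_ ?_ ?_ u hu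
  · rw [← main]; exact hf u
  · refine tendsto_nhds_unique (hf []) ?_
    refine Tendsto.congr' ?_ tendsto_const_nhds
    have : ∀ᶠ N : ℕ in g, 1 ≤ N := hg (eventually_ge_atTop 1)
    filter_upwards [this] with N hN
    have : (N : ℝ) ≠ 0 := by positivity
    simp [occ_nil, this]
  · intro u
    refine tendsto_nhds_unique (hf u) (((hf _).add (hf _)).congr ?_)
    intro N
    rw [← add_div, ← Finset.sum_add_distrib]
    simp_rw [← occ_right]
  · intro u
    have h1 : Tendsto (fun N : ℕ => (occ x u (N + 1) - occ x u 1) / (N : ℝ)) g (nhds 0) := by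
      refine Tendsto.mono_left ?_ hg
      refine squeeze_zero_norm (a := fun N : ℕ => 1 / (N : ℝ)) ?_ tendsto_one_div_atTop_nhds_zero_nat
      intro N
      rw [norm_div, Real.norm_natCast, Real.norm_eq_abs]
      gcongr
      have := occ_nonneg x u (N + 1)
      have := occ_le_one x u (N + 1)
      have := occ_nonneg x u 1
      have := occ_le_one x u 1
      rw [abs_le]; constructor <;> linarith
    have h2 := (((hf (false :: u)).add (hf (true :: u))).sub h1)
    rw [sub_zero] at h2
    refine tendsto_nhds_unique (hf u) (h2.congr ?_)
    intro N
    rw [← add_div, ← Finset.sum_add_distrib, ← sub_div]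
    simp_rw [← occ_left]
    congr 1
    have := Finset.sum_range_succ (fun i => occ x u (i + 1)) N
    rw [Finset.sum_range_succ'] at this
    simp only [zero_add] at this
    linarith
  · intro v w hv
    have h2 := ((hdev v w hv).mono_left hg).add ((hf v).const_mul (κ w v))
    rw [zero_add] at h2
    refine tendsto_nhds_unique (hf _) (h2.congr ?_)
    intro N
    rw [← mul_div_assoc, ← add_div, Finset.mul_sum, ← Finset.sum_add_distrib]
    congr 1
    refine Finset.sum_congr rfl fun i _ => ?_
    rw [dev]; ring

/-- Strong law for bounded orthogonal variables. -/
theorem slln_orth {Ω : Type*} [MeasurableSpace Ω] (P : Measure Ω) [IsProbabilityMeasure P]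
    (D : ℕ → Ω → ℝ) (hm : ∀ i, Measurable (D i)) (hb : ∀ i ω, |D i ω| ≤ 1)
    (ho : ∀ i j, i < j → ∫ ω, D i ω * D j ω ∂P = 0) :
    ∀ᵐ ω ∂P, Tendsto (fun N : ℕ => (∑ i ∈ Finset.range N, D i ω) / (N : ℝ)) atTop (nhds 0) := by
  set S : ℕ → Ω → ℝ := fun N ω => ∑ i ∈ Finset.range N, D i ω with hS
  have hSm : ∀ N, Measurable (S N) := fun N => Finset.measurable_sum _ fun i _ => hm i
  have hSb : ∀ N ω, |S N ω| ≤ N := by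
    intro N ω
    calc |S N ω| ≤ ∑ i ∈ Finset.range N, |D i ω| := Finset.abs_sum_le_sum_abs _ _
      _ ≤ ∑ i ∈ Finset.range N, (1 : ℝ) := Finset.sum_le_sum fun i _ => hb i ω
      _ = N := by simp
  have intgB : ∀ (F : Ω → ℝ) (C : ℝ), Measurable F → (∀ ω, |F ω| ≤ C) → Integrable F P :=
    fun F C h1 h2 => Integrable.of_bound h1.aestronglyMeasurable C
      (Eventually.of_forall h2)
  have hDD : ∀ i j, Integrable (fun ω => D i ω * D j ω) P := fun i j =>
    intgB _ 1 ((hm i).mul (hm j)) fun ω => by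
      rw [abs_mul]; exact mul_le_one₀ (hb i ω) (abs_nonneg _) (hb j ω)
  have hSS : ∀ N, Integrable (fun ω => S N ω ^ 2) P := fun N =>
    intgB _ ((N : ℝ) ^ 2) ((hSm N).pow_const 2) fun ω => by
      rw [abs_pow]; exact pow_le_pow_left₀ (abs_nonneg _) (hSb N ω) 2
  have hvar : ∀ N : ℕ, ∫ ω, S N ω ^ 2 ∂P ≤ N := by
    intro N
    induction N with
    | zero => simp [hS]
    | succ N ih =>
      have e : ∀ ω, S (N + 1) ω ^ 2 =
          S N ω ^ 2 + 2 * (∑ i ∈ Finset.range N, D i ω * D N ω) + D N ω * D N ω := by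
        intro ω
        simp only [hS, Finset.sum_range_succ, ← Finset.sum_mul]
        ring
      have i1 : Integrable (fun ω => ∑ i ∈ Finset.range N, D i ω * D N ω) P :=
        integrable_finsetSum _ fun i _ => hDD i N
      simp_rw [e]
      have i2 : Integrable (fun ω => S N ω ^ 2 +
          2 * (∑ i ∈ Finset.range N, D i ω * D N ω)) P := (hSS N).add (i1.const_mul 2)
      rw [integral_add i2 (hDD N N),
        integral_add (hSS N) (i1.const_mul 2), integral_const_mul,
        integral_finsetSum _ fun i _ => hDD i N,
        Finset.sum_eq_zero fun i hi => ho i N (Finset.mem_range.1 hi)]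
      have : ∫ ω, D N ω * D N ω ∂P ≤ ∫ ω, (1 : ℝ) ∂P := by
        refine integral_mono (hDD N N) (integrable_const _) fun ω => ?_
        have := abs_le.1 (hb N ω)
        show D N ω * D N ω ≤ 1
        nlinarith
      simp at this
      push_cast
      linarith
  -- along squares
  have hsq : ∀ᵐ ω ∂P, Tendsto (fun m : ℕ => S (m ^ 2) ω / (m : ℝ) ^ 2) atTop (nhds 0) := by
    have hmeas : ∀ m : ℕ, Measurable (fun ω => ENNReal.ofReal ((S (m ^ 2) ω / (m : ℝ) ^ 2) ^ 2)) :=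
      fun m => (((hSm _).div_const _).pow_const 2).ennreal_ofReal
    have hle : ∀ m : ℕ, ∫⁻ ω, ENNReal.ofReal ((S (m ^ 2) ω / (m : ℝ) ^ 2) ^ 2) ∂P ≤
        ENNReal.ofReal (1 / (m : ℝ) ^ 2) := by
      intro m
      have e : ∀ ω, (S (m ^ 2) ω / (m : ℝ) ^ 2) ^ 2 = S (m ^ 2) ω ^ 2 * (((m : ℝ) ^ 2) ^ 2)⁻¹ := by
        intro ω; rw [div_pow, div_eq_mul_inv]
      rw [← ofReal_integral_eq_lintegral_ofReal]
      · apply ENNReal.ofReal_le_ofReal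
        simp_rw [e]
        rw [integral_mul_const]
        have h := hvar (m ^ 2)
        push_cast at h
        rcases Nat.eq_zero_or_pos m with rfl | hm0
        · simp
        · have : (0 : ℝ) < m := by exact_mod_cast hm0
          calc _ ≤ (m : ℝ) ^ 2 * (((m : ℝ) ^ 2) ^ 2)⁻¹ := by gcongr
            _ = _ := by field_simp
      · simp_rw [e]; exact (hSS _).mul_const _
      · exact Eventually.of_forall fun ω => sq_nonneg _
    have hfin : ∫⁻ ω, ∑' m : ℕ, ENNReal.ofReal ((S (m ^ 2) ω / (m : ℝ) ^ 2) ^ 2) ∂P ≠ ⊤ := by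
      rw [lintegral_tsum fun m => (hmeas m).aemeasurable]
      refine ne_top_of_le_ne_top ?_ (ENNReal.tsum_le_tsum hle)
      exact (Real.summable_one_div_nat_pow.2 (by norm_num : 1 < 2)).tsum_ofReal_ne_top
    filter_upwards [ae_lt_top (Measurable.ennreal_tsum hmeas) hfin] with ω hω
    have h0 := ENNReal.tendsto_atTop_zero_of_tsum_ne_top hω.ne
    have h1 := (ENNReal.tendsto_toReal ENNReal.zero_ne_top).comp h0
    have h2 : Tendsto (fun m : ℕ => (S (m ^ 2) ω / (m : ℝ) ^ 2) ^ 2) atTop (nhds 0) := by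
      refine h1.congr fun m => ?_
      simp only [Function.comp]
      exact ENNReal.toReal_ofReal (sq_nonneg _)
    have h3 := h2.sqrt
    simp only [Real.sqrt_sq_eq_abs, Real.sqrt_zero] at h3
    exact (tendsto_zero_iff_abs_tendsto_zero _).2 h3
  filter_upwards [hsq] with ω hω
  have hsqrt : Tendsto Nat.sqrt atTop atTop := by
    refine tendsto_atTop.2 fun b => ?_
    filter_upwards [eventually_ge_atTop (b * b)] with n hn
    exact Nat.le_sqrt.2 hn
  have hb1 : Tendsto (fun m : ℕ => |S (m ^ 2) ω / (m : ℝ) ^ 2| + 2 * (1 / (m : ℝ))) atTop (nhds 0) := by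
    have := ((tendsto_zero_iff_abs_tendsto_zero _).1 hω).add
      ((tendsto_one_div_atTop_nhds_zero_nat (𝕜 := ℝ)).const_mul 2)
    simpa using this
  refine squeeze_zero_norm' ?_ (hb1.comp hsqrt)
  filter_upwards [eventually_ge_atTop 1] with n hn
  simp only [Function.comp]
  set m := Nat.sqrt n with hmdef
  have hm1 : 1 ≤ m := Nat.le_sqrt.2 (by simpa using hn)
  have hmn : m ^ 2 ≤ n := Nat.sqrt_le' n
  have hnm : n ≤ m ^ 2 + 2 * m := by have := Nat.sqrt_le_add n; nlinarith
  have hdiff : |S n ω - S (m ^ 2) ω| ≤ 2 * m := by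
    have e : S n ω - S (m ^ 2) ω = ∑ i ∈ Finset.Ico (m ^ 2) n, D i ω := by
      rw [Finset.sum_Ico_eq_sub _ hmn]
    rw [e]
    calc _ ≤ ∑ i ∈ Finset.Ico (m ^ 2) n, |D i ω| := Finset.abs_sum_le_sum_abs _ _
      _ ≤ ∑ i ∈ Finset.Ico (m ^ 2) n, (1 : ℝ) := Finset.sum_le_sum fun i _ => hb i ω
      _ = ((n - m ^ 2 : ℕ) : ℝ) := by simp
      _ ≤ ((2 * m : ℕ) : ℝ) := by exact_mod_cast (by omega)
      _ = _ := by push_cast; ring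
  have hmR : (0 : ℝ) < m := by exact_mod_cast hm1
  have hmnR : (m : ℝ) ^ 2 ≤ n := by exact_mod_cast hmn
  change ‖S n ω / (n : ℝ)‖ ≤ _
  rw [norm_div, Real.norm_natCast, Real.norm_eq_abs, abs_div, abs_of_pos (by positivity : (0:ℝ) < (m:ℝ) ^ 2)]
  have h4 : |S n ω| ≤ |S (m ^ 2) ω| + 2 * m := by
    have := abs_sub_abs_le_abs_sub (S n ω) (S (m ^ 2) ω)
    linarith
  calc |S n ω| / (n : ℝ) ≤ (|S (m ^ 2) ω| + 2 * m) / (m : ℝ) ^ 2 := by gcongr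
    _ = _ := by field_simp

/-- The word `x` seen as a sequence indexed from one. -/
def wordSeq (x : List Bool) (m : ℕ) : Bool := x.getD (m - 1) false

theorem occ_ext (X : ℕ → Bool) (x : List Bool)
    (h : ∀ r, r < x.length → X (1 + r) = x.getD r false) (u : List Bool) (i : ℕ) (hi : 1 ≤ i)
    (hu : i + u.length ≤ x.length + 1) : occ X u i = occ (wordSeq x) u i := by
  have : ∀ r, r < u.length → X (i + r) = wordSeq x (i + r) := by
    intro r hr
    have := h (i + r - 1) (by omega)
    rw [wordSeq, ← this]; congr 1; omega
  unfold occ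
  congr 1
  rw [eq_iff_iff]
  exact forall₂_congr fun r hr => by rw [this r hr]

theorem drop_of_occ (x v : List Bool) (j : ℕ) (hj : 1 ≤ j) (hl : x.length + 1 = j + v.length)
    (h : occ (wordSeq x) v j ≠ 0) : x.drop (j - 1) = v := by
  unfold occ at h
  split_ifs at h with h1
  · refine List.ext_getElem (by simp; omega) ?_
    intro r hr1 hr2
    have := h1 r hr2
    rw [wordSeq, List.getD_eq_getElem _ _ (by omega), List.getD_eq_getElem _ _ hr2] at this
    rw [← this, List.getElem_drop]
    congr 1; omega
  · exact absurd rfl h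

theorem sum_occ (X : ℕ → Bool) (n : ℕ) : ∑ x : Fin n → Bool, occ X (List.ofFn x) 1 = 1 := by
  rw [Finset.sum_eq_single (fun i : Fin n => X (1 + i))]
  · unfold occ
    rw [if_pos]
    intro r hr
    rw [List.getD_eq_getElem _ _ hr]; simp
  · intro x _ hx
    unfold occ
    rw [if_neg]
    intro h
    apply hx
    funext i
    have := h i (by simp)
    rw [List.getD_eq_getElem _ _ (by simp)] at this
    simpa using this.symm
  · simp

theorem measurable_occ {Ω : Type*} [MeasurableSpace Ω] (X : ℕ → Ω → Bool)
    (hX : ∀ n, Measurable (X n)) (u : List Bool) (i : ℕ) :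
    MeasurableSet {ω | ∀ r, r < u.length → X (i + r) ω = u.getD r false} ∧
    Measurable (fun ω => occ (fun n => X n ω) u i) := by
  have h : MeasurableSet {ω | ∀ r, r < u.length → X (i + r) ω = u.getD r false} := by
    simp only [Set.ofPred_forall]
    refine MeasurableSet.iInter fun r => MeasurableSet.iInter fun _ => ?_
    exact hX (i + r) (measurableSet_singleton (u.getD r false))
  refine ⟨h, ?_⟩
  unfold occ
  exact Measurable.ite h measurable_const measurable_const

theorem integral_occ {Ω : Type*} [MeasurableSpace Ω] (P : Measure Ω) (X : ℕ → Ω → Bool)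
    (hX : ∀ n, Measurable (X n)) (u : List Bool) (i : ℕ) :
    ∫ ω, occ (fun n => X n ω) u i ∂P =
      (P {ω | ∀ r, r < u.length → X (i + r) ω = u.getD r false}).toReal := by
  have h := (measurable_occ X hX u i).1
  have := integral_indicator_one (μ := P) h
  rw [Measure.real] at this
  rw [← this]
  congr 1
  funext ω
  simp only [occ, Set.indicator, Set.mem_ofPred_eq, Pi.one_apply]
  

section
variable {Ω : Type*} [MeasurableSpace Ω]

theorem orth (P : Measure Ω) [IsProbabilityMeasure P]
    (k : ℕ) (κ : Bool → List Bool → ℝ) (ν : List Bool → ℝ)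
    (X : ℕ → Ω → Bool) (hX : ∀ n, Measurable (X n))
    (hproc : ∀ x : List Bool, k ≤ x.length →
      (P {ω | ∀ i, i < x.length → X (1 + i) ω = x.getD i false}).toReal =
        ν (x.take k) *
          ∏ j ∈ Finset.Ico k x.length, κ (x.getD j false) ((x.drop (j - k)).take k))
    (v : List Bool) (w : Bool) (hv : v.length = k) (i j : ℕ) (hi : 1 ≤ i) (hij : i < j) :
    ∫ ω, dev κ v w (fun n => X n ω) i * dev κ v w (fun n => X n ω) j ∂P = 0 := by
  have hstep : ∀ x : List Bool, k ≤ x.length →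
      ∫ ω, occ (fun n => X n ω) (x ++ [w]) 1 ∂P =
        κ w (x.drop (x.length - k)) * ∫ ω, occ (fun n => X n ω) x 1 ∂P := by
    intro x hx
    rw [integral_occ P X hX, integral_occ P X hX, hproc x hx, hproc (x ++ [w]) (by simp; omega)]
    rw [List.length_append, List.length_singleton, Finset.prod_Ico_succ_top hx,
      List.take_append_of_le_length hx]
    have e1 : (x ++ [w]).getD x.length false = w := by
      rw [List.getD_append_right _ _ _ _ le_rfl]; simp
    have e2 : ((x ++ [w]).drop (x.length - k)).take k = x.drop (x.length - k) := by
      rw [List.drop_append_of_le_length (by omega), List.take_append_of_le_length (by simp; omega),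
        List.take_of_length_le (by simp; omega)]
    have e3 : ∀ m ∈ Finset.Ico k x.length,
        κ ((x ++ [w]).getD m false) (((x ++ [w]).drop (m - k)).take k) =
        κ (x.getD m false) ((x.drop (m - k)).take k) := by
      intro m hm
      rw [Finset.mem_Ico] at hm
      rw [List.getD_append _ _ _ _ hm.2, List.drop_append_of_le_length (by omega),
        List.take_append_of_le_length (by simp; omega)]
    rw [e1, e2, Finset.prod_congr rfl e3]
    ring
  obtain ⟨n, hn⟩ : ∃ n, n + 1 = j + k := ⟨j + k - 1, by omega⟩
  have hpt : ∀ ω, dev κ v w (fun n => X n ω) i * dev κ v w (fun n => X n ω) j =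
      ∑ x : Fin n → Bool, dev κ v w (wordSeq (List.ofFn x)) i * occ (wordSeq (List.ofFn x)) v j *
        (occ (fun n => X n ω) (List.ofFn x ++ [w]) 1 - κ w v * occ (fun n => X n ω) (List.ofFn x) 1) := by
    intro ω
    rw [← one_mul (dev κ v w (fun n => X n ω) i * _), ← sum_occ (fun n => X n ω) n, Finset.sum_mul]
    refine Finset.sum_congr rfl fun x _ => ?_
    rw [occ_append]
    by_cases h : ∀ r, r < (List.ofFn x).length → X (1 + r) ω = (List.ofFn x).getD r false
    · have hlen : (List.ofFn x).length = n := by simp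
      have E := occ_ext (fun n => X n ω) (List.ofFn x) h
      have a1 := E v i hi (by omega)
      have a2 := E (v ++ [w]) i hi (by simp only [List.length_append, List.length_singleton]; omega)
      have a3 := E v j (by omega) (by omega)
      rw [dev_eq κ v w _ j, dev, dev, a1, a2, a3, hlen, hv, add_comm 1 n, hn]
      ring
    · have : occ (fun n => X n ω) (List.ofFn x) 1 = 0 := by
        unfold occ; rw [if_neg h]
      rw [this]; ring
  have intgB : ∀ u, Integrable (fun ω => occ (fun n => X n ω) u 1) P := fun u =>
    Integrable.of_bound (measurable_occ X hX u 1).2.aestronglyMeasurable 1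
      (Eventually.of_forall fun ω => by
        rw [Real.norm_eq_abs, abs_of_nonneg (occ_nonneg _ _ _)]; exact occ_le_one _ _ _)
  simp_rw [hpt]
  have intgD : ∀ x : Fin n → Bool, Integrable (fun ω => dev κ v w (wordSeq (List.ofFn x)) i *
      occ (wordSeq (List.ofFn x)) v j * (occ (fun n => X n ω) (List.ofFn x ++ [w]) 1 -
        κ w v * occ (fun n => X n ω) (List.ofFn x) 1)) P := fun x =>
    ((intgB _).sub ((intgB _).const_mul _)).const_mul _
  rw [integral_finsetSum _ fun x _ => intgD x]
  refine Finset.sum_eq_zero fun x _ => ?_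
  have hlen : (List.ofFn x).length = n := by simp
  rw [integral_const_mul, integral_sub (intgB _) ((intgB _).const_mul _), integral_const_mul,
    hstep _ (by omega)]
  by_cases h : occ (wordSeq (List.ofFn x)) v j = 0
  · rw [h]; ring
  · have := drop_of_occ _ v j (by omega) (by omega) h
    rw [hlen, show n - k = j - 1 by omega, this]
    ring
end

end TwoFaced

/-- for the process `T(k,π)` (or `T̄(k,π)`) with an arbitrary initial
distribution, with probability one, for every binary word `u` with `1 ≤ |u| ≤ k` the
frequency `ν_t(u)/(t - |u|)` of occurrences of `u` among
`X_1…X_{|u|}, X_2…X_{|u|+1}, …, X_{t-|u|+1}…X_t` tends to `2^{-|u|}` as `t → ∞`. -/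
theorem two_faced_frequencies_ae {Ω : Type*} [MeasurableSpace Ω]
    (P : Measure Ω) [IsProbabilityMeasure P]
    (k : ℕ) (hk : 1 ≤ k) (π : ℝ) (hπ : π ∈ Set.Ioo (0 : ℝ) 1)
    (κ : Bool → List Bool → ℝ) (hκ : κ = tface π ∨ κ = tbarface π)
    (ν : List Bool → ℝ)
    (X : ℕ → Ω → Bool) (hX : ∀ n, Measurable (X n))
    (hproc : ∀ x : List Bool, k ≤ x.length →
      (P {ω | ∀ i, i < x.length → X (1 + i) ω = x.getD i false}).toReal =
        ν (x.take k) *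
          ∏ j ∈ Finset.Ico k x.length, κ (x.getD j false) ((x.drop (j - k)).take k)) :
    ∀ᵐ ω ∂P, ∀ u : List Bool, 1 ≤ u.length → u.length ≤ k →
      Tendsto (fun t : ℕ =>
          (((Finset.Icc 1 (t + 1 - u.length)).filter
              (fun i => ∀ r, r < u.length → X (i + r) ω = u.getD r false)).card : ℝ) /
            ((t : ℝ) - (u.length : ℝ)))
        atTop (nhds (((2 : ℝ) ^ u.length)⁻¹)) := by
  obtain ⟨hpos, hflip⟩ := TwoFaced.kernel_facts π hπ κ hκ
  have hall : ∀ᵐ ω ∂P, ∀ v : List Bool, ∀ w : Bool, v.length = k →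
      Tendsto (fun N : ℕ => (∑ i ∈ Finset.range N,
        TwoFaced.dev κ v w (fun n => X n ω) (i + 1)) / (N : ℝ)) atTop (nhds 0) := by
    rw [ae_all_iff]; intro v
    rw [ae_all_iff]; intro w
    by_cases hv : v.length = k
    · have := TwoFaced.slln_orth P (fun i ω => TwoFaced.dev κ v w (fun n => X n ω) (i + 1))
        (fun i => ((TwoFaced.measurable_occ X hX _ _).2).sub
          (((TwoFaced.measurable_occ X hX _ _).2).const_mul _))
        (fun i ω => TwoFaced.dev_abs κ hpos v w _ _)
        (fun i j hij => TwoFaced.orth P k κ ν X hX hproc v w hv (i + 1) (j + 1) (by omega) (by omega))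
      filter_upwards [this] with ω hω _
      exact hω
    · exact Eventually.of_forall fun ω h => absurd h hv
  filter_upwards [hall] with ω hω u hu1 huk
  have hlim := TwoFaced.deterministic k κ (fun w u => (hpos w u).1) hflip (fun n => X n ω) hω u huk
  have hN : Tendsto (fun t : ℕ => t + 1 - u.length) atTop atTop := by
    refine tendsto_atTop.2 fun b => ?_
    filter_upwards [eventually_ge_atTop (b + u.length)] with n hn
    omega
  have hratio : Tendsto (fun N : ℕ => 1 + 1 / ((N : ℝ) - 1)) atTop (nhds 1) := by
    have h : Tendsto (fun N : ℕ => (N : ℝ) - 1) atTop atTop :=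
      tendsto_atTop_add_const_right _ (-1) tendsto_natCast_atTop_atTop
    have := (h.inv_tendsto_atTop).const_add 1
    simpa using this
  have h1 := (hlim.mul hratio).comp hN
  rw [mul_one] at h1
  refine h1.congr' ?_
  filter_upwards [eventually_ge_atTop (u.length + 2)] with t ht
  simp only [Function.comp]
  obtain ⟨N, hNe⟩ : ∃ N, t + 1 - u.length = N := ⟨_, rfl⟩
  have hcast : (t : ℝ) - u.length = (N : ℝ) - 1 := by
    have : (t : ℝ) + 1 = N + u.length := by exact_mod_cast (by omega : t + 1 = N + u.length)
    linarith
  rw [hNe, hcast]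
  have hN2 : (2 : ℝ) ≤ N := by exact_mod_cast (by omega : 2 ≤ N)
  have hcard : (((Finset.Icc 1 N).filter
      (fun i => ∀ r, r < u.length → X (i + r) ω = u.getD r false)).card : ℝ) =
      ∑ i ∈ Finset.range N, TwoFaced.occ (fun n => X n ω) u (i + 1) := by
    rw [Finset.card_filter]
    push_cast
    rw [Finset.range_eq_Ico, Finset.sum_Ico_add' (fun i => TwoFaced.occ (fun n => X n ω) u i) 0 N 1]
    have : Finset.Icc 1 N = Finset.Ico (0 + 1) (N + 1) := by ext; simp; try omega
    rw [this]
    refine Finset.sum_congr rfl fun i _ => ?_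
    unfold TwoFaced.occ
    congr
  rw [hcard]
  have a : (N : ℝ) ≠ 0 := by linarith
  have b : (N : ℝ) - 1 ≠ 0 := by linarith
  field_simp
  ring
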